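/- arXiv:2301.09042 — 2 statements merged into one kernel-verified Lean document; each statement's English description precedes it below -/
import Mathlib

section
/- Let X be a topological space with a topological basis B, let μ be a measure on X, let Y be a finite type, and let f : X → Y be a classifier. Then f is explainable (i.e., there exists a set E ⊆ X that is meagre and μ-null such that every x ∉ E has an explanation: a basic open set A ∈ B with x ∈ A and A ⊆ f⁻¹({f x})) if and only if for every y ∈ Y there exist a set O_y that is open in X and a set E_y that is meagre and μ-null such that f⁻¹({y}) = O_y ∪ E_y. -/
open MeasureTheory

/-!
The complements of the sets of edge cases form the filter `residual X ⊔ ae μ`, which is closed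
under countable intersections. In terms of this filter, `f` is explainable exactly when eventually
the fiber of `f` through `x` is a neighborhood of `x`, and `f ⁻¹' {y}` decomposes exactly when
eventually it is a neighborhood of `x` if it contains `x`. Quantifying the latter over the
countably many `y` commutes with the filter and gives the former.
-/

section Filter

open Filter Set Topology TopologicalSpace

variable {X Y : Type*} {l : Filter X}

theorem eventually_iff_exists_compl_mem {p : X → Prop} :
    (∀ᶠ x in l, p x) ↔ ∃ E : Set X, Eᶜ ∈ l ∧ ∀ x ∉ E, p x :=
  eventually_iff_exists_mem.trans compl_surjective.exists

theorem eventually_fiber_mem_nhds_iff [TopologicalSpace X] [Countable Y]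
    [CountableInterFilter l] {f : X → Y} :
    (∀ᶠ x in l, f ⁻¹' {f x} ∈ 𝓝 x) ↔
      ∀ y, ∀ᶠ x in l, x ∈ f ⁻¹' {y} → f ⁻¹' {y} ∈ 𝓝 x := by
  simp only [← eventually_countable_forall, mem_preimage, mem_singleton_iff, forall_eq']

theorem exists_isOpen_eq_union_iff_eventually_mem_nhds [TopologicalSpace X] {s : Set X} :
    (∃ O E : Set X, IsOpen O ∧ Eᶜ ∈ l ∧ s = O ∪ E) ↔ ∀ᶠ x in l, x ∈ s → s ∈ 𝓝 x := by
  constructor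
  · rintro ⟨O, E, hO, hE, rfl⟩
    filter_upwards [hE] with x hxE hx
    have hxO : x ∈ O := hx.resolve_right hxE
    exact mem_of_superset (hO.mem_nhds hxO) subset_union_left
  · intro h
    refine ⟨interior s, s \ interior s, isOpen_interior, ?_,
      (union_sdiff_cancel interior_subset).symm⟩
    filter_upwards [h] with x hx ⟨hxs, hx_int⟩
    exact hx_int (mem_interior_iff_mem_nhds.2 (hx hxs))

theorem compl_mem_residual_sup_ae_iff {F : Type*} [FunLike F (Set X) ENNReal]
    [OuterMeasureClass F X] [TopologicalSpace X] {μ : F} {E : Set X} :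
    Eᶜ ∈ residual X ⊔ ae μ ↔ IsMeagre E ∧ μ E = 0 :=
  mem_sup.trans (and_congr Iff.rfl compl_mem_ae_iff)

theorem explainable_iff_fibers_decompose_general [TopologicalSpace X] [Countable Y]
    [CountableInterFilter l] {B : Set (Set X)} (hB : IsTopologicalBasis B) (f : X → Y) :
    (∃ E : Set X, Eᶜ ∈ l ∧ ∀ x ∉ E, ∃ A ∈ B, x ∈ A ∧ A ⊆ f ⁻¹' {f x}) ↔
      ∀ y : Y, ∃ O E : Set X, IsOpen O ∧ Eᶜ ∈ l ∧ f ⁻¹' {y} = O ∪ E := by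
  simp only [← hB.mem_nhds_iff, ← eventually_iff_exists_compl_mem,
    exists_isOpen_eq_union_iff_eventually_mem_nhds, eventually_fiber_mem_nhds_iff]

end Filter

/-- **Characterization of explainability.** A classifier `f : X → Y` is explainable for a
scheme given by a topological basis `B` and a measure `μ` (i.e., there is a meagre, `μ`-null
set of edge cases `E` such that every point outside `E` has a basic open explanation
contained in its fiber) if and only if every fiber `f ⁻¹' {y}` is the union of an open set
and a meagre, `μ`-null set. -/
theorem explainable_iff_fibers_decompose {X Y : Type*} [TopologicalSpace X]
    [MeasurableSpace X] [Finite Y] (B : Set (Set X))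
    (hB : TopologicalSpace.IsTopologicalBasis B) (μ : Measure X) (f : X → Y) :
    (∃ E : Set X, IsMeagre E ∧ μ E = 0 ∧
        ∀ x ∉ E, ∃ A ∈ B, x ∈ A ∧ A ⊆ f ⁻¹' {f x}) ↔
      (∀ y : Y, ∃ O E : Set X, IsOpen O ∧ IsMeagre E ∧ μ E = 0 ∧
        f ⁻¹' {y} = O ∪ E) := by
  simpa only [compl_mem_residual_sup_ae_iff, and_assoc] using
    explainable_iff_fibers_decompose_general (l := residual X ⊔ ae μ) hB f
end

section
/- Let X be a topological space, let μ be a measure on X, let Y be a finite type, and let f₁, …, f_k : X → Y be classifiers such that for each i and each y ∈ Y there exist an open set O and a meagre, μ-null set E with f_i⁻¹({y}) = O ∪ E. Let g : Y^k → Y be any aggregation function (in particular, the majority-vote function defining a voting ensemble), and define the ensemble classifier f : X → Y by f(x) = g(f₁(x), …, f_k(x)). Then for each y ∈ Y there exist an open set O_y and a meagre, μ-null set E_y with f⁻¹({y}) = O_y ∪ E_y; hence, if the decomposition property is equivalent to explainability relative to a basis B of X, the ensemble f is explainable whenever each f_i is. -/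
open MeasureTheory

/-!
A countable-valued classifier has decomposable fibers exactly when it is locally constant near all
points outside a negligible set. Local constancy at a point passes to finite tuples, since finitely
many neighbourhoods intersect in a neighbourhood, and to compositions with an arbitrary function.
Countability of the label set is what allows the exceptional sets of all the fibers to be gathered
into a single negligible set.
-/

section DecomposableFibers

open Filter Topology

variable {ι X Y Z : Type*} [TopologicalSpace X] {l : Filter X}

/-- Every fiber of `f` is the union of an open set and a negligible set. The ideal of negligible
sets is encoded by the filter `l` of their complements: meagre `μ`-null sets correspond to
`residual X ⊔ ae μ`. -/
def HasDecomposableFibers (l : Filter X) (f : X → Y) : Prop :=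
  ∀ y : Y, ∃ O E : Set X, IsOpen O ∧ Eᶜ ∈ l ∧ f ⁻¹' {y} = O ∪ E

/-- Off a set negligible for `l` (one whose complement is in `l`), `f` is constant on a
neighbourhood of each point. This is the form of decomposability of fibers that is inherited by
finite tuples and compositions. -/
def EventuallyLocallyConstant (l : Filter X) (f : X → Y) : Prop :=
  ∀ᶠ x in l, ∀ᶠ x' in 𝓝 x, f x' = f x

theorem exists_isOpen_union_iff_eventually_mem_nhds {s : Set X} :
    (∃ O E : Set X, IsOpen O ∧ Eᶜ ∈ l ∧ s = O ∪ E) ↔ ∀ᶠ x in l, x ∈ s → s ∈ 𝓝 x := by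
  constructor
  · rintro ⟨O, E, hO, hE, rfl⟩
    filter_upwards [hE] with x hxE hx
    have hxO : x ∈ O := hx.resolve_right hxE
    exact mem_of_superset (hO.mem_nhds hxO) Set.subset_union_left
  · intro hs
    refine ⟨interior s, s \ interior s, isOpen_interior, ?_,
      (Set.union_sdiff_cancel interior_subset).symm⟩
    filter_upwards [hs] with x hx hxdiff
    exact hxdiff.2 (mem_interior_iff_mem_nhds.2 (hx hxdiff.1))

theorem hasDecomposableFibers_residual_sup_ae_iff [MeasurableSpace X] {μ : Measure X}
    {f : X → Y} :
    HasDecomposableFibers (residual X ⊔ ae μ) f ↔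
      ∀ y : Y, ∃ O E : Set X, IsOpen O ∧ IsMeagre E ∧ μ E = 0 ∧ f ⁻¹' {y} = O ∪ E := by
  simp only [HasDecomposableFibers, IsMeagre, mem_sup, mem_ae_iff, compl_compl, and_assoc]

theorem HasDecomposableFibers.eventuallyLocallyConstant [Countable Y] [CountableInterFilter l]
    {f : X → Y} (hf : HasDecomposableFibers l f) : EventuallyLocallyConstant l f := by
  have hfibers : ∀ᶠ x in l, ∀ y, x ∈ f ⁻¹' {y} → f ⁻¹' {y} ∈ 𝓝 x :=
    eventually_countable_forall.2 fun y => exists_isOpen_union_iff_eventually_mem_nhds.1 (hf y)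
  exact hfibers.mono fun x hx => hx (f x) rfl

namespace EventuallyLocallyConstant

theorem hasDecomposableFibers {f : X → Y} (hf : EventuallyLocallyConstant l f) :
    HasDecomposableFibers l f := by
  refine fun y => exists_isOpen_union_iff_eventually_mem_nhds.2 ?_
  filter_upwards [hf] with x hx hxy
  exact hx.mono fun x' hx' => hx'.trans hxy

theorem pi [Finite ι] {Y : ι → Type*} {f : ∀ i, X → Y i}
    (hf : ∀ i, EventuallyLocallyConstant l (f i)) :
    EventuallyLocallyConstant l fun x i => f i x := by
  filter_upwards [eventually_all.2 hf] with x hx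
  exact (eventually_all.2 hx).mono fun x' hx' => funext hx'

theorem comp {f : X → Y} (g : Y → Z) (hf : EventuallyLocallyConstant l f) :
    EventuallyLocallyConstant l fun x => g (f x) :=
  hf.mono fun _ hx => hx.mono fun _ hx' => congrArg g hx'

end EventuallyLocallyConstant

theorem ensemble_preserves_explainability_general [Finite ι] {Y : ι → Type*}
    [∀ i, Countable (Y i)] [CountableInterFilter l] {f : ∀ i, X → Y i}
    (hf : ∀ i, HasDecomposableFibers l (f i)) (g : (∀ i, Y i) → Z) :
    HasDecomposableFibers l fun x => g fun i => f i x :=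
  have htuple : EventuallyLocallyConstant l fun x i => f i x :=
    .pi fun i => (hf i).eventuallyLocallyConstant
  (htuple.comp g).hasDecomposableFibers

end DecomposableFibers

/-- **Voting ensembles preserve explainability.** If each classifier `f i : X → Y` has
decomposable fibers (each fiber is the union of an open set and a meagre, `μ`-null set),
then for any aggregation function `g : (Fin k → Y) → Y` (e.g. majority vote), the ensemble
classifier `x ↦ g (fun i => f i x)` also has decomposable fibers. -/
theorem ensemble_preserves_explainability {X Y : Type*} [TopologicalSpace X]
    [MeasurableSpace X] [Finite Y] (μ : Measure X) (k : ℕ) (f : Fin k → X → Y)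
    (hf : ∀ i : Fin k, ∀ y : Y, ∃ O E : Set X, IsOpen O ∧ IsMeagre E ∧ μ E = 0 ∧
      (f i) ⁻¹' {y} = O ∪ E)
    (g : (Fin k → Y) → Y) :
    ∀ y : Y, ∃ O E : Set X, IsOpen O ∧ IsMeagre E ∧ μ E = 0 ∧
      (fun x => g (fun i => f i x)) ⁻¹' {y} = O ∪ E :=
  hasDecomposableFibers_residual_sup_ae_iff.1 <| ensemble_preserves_explainability_general
    (fun i => hasDecomposableFibers_residual_sup_ae_iff.2 (hf i)) g
end
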